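/- arXiv:math/0506205 — 2 statements merged into one kernel-verified Lean document; each statement's English description precedes it below -/
import Mathlib

section
/- For every complex number z with Re z > 1, Kurepa's function satisfies the second-order functional equation K(z + 1) − (z + 1)·K(z) + z·K(z − 1) = 0. -/
open MeasureTheory Set

/-- Kurepa's function `K(z) = ∫₀^∞ e^{-t} (t^z - 1)/(t - 1) dt`,
where `t^z = exp(z log t)` for `t > 0`. -/
noncomputable def kurepa (z : ℂ) : ℂ :=
  ∫ t in Ioi (0 : ℝ), (Real.exp (-t) : ℂ) * (((t : ℂ) ^ z - 1) / ((t : ℂ) - 1))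

/-!
Away from `t = 1` one has `(t ^ (z + 1) - 1) / (t - 1) - (t ^ z - 1) / (t - 1) = t ^ z`, so
integrating against `e ^ (-t)` gives `K (z + 1) - K z = Γ (z + 1)`. The second-order equation is
then `Γ (z + 1) = z * Γ z`. The integrals converge as soon as `-1 < re z`, because the integrand
is the slope at `1` of `t ↦ e ^ (-t) * (t ^ z - 1)`, a function which is integrable on `(0, ∞)`
and differentiable at `1`.
-/

open Filter Topology Asymptotics in
theorem slope_isBigO_one {𝕜 E : Type*} [NontriviallyNormedField 𝕜] [NormedAddCommGroup E]
    [NormedSpace 𝕜 E] {f : 𝕜 → E} {a : 𝕜} (hf : DifferentiableAt 𝕜 f a) :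
    slope f a =O[𝓝 a] fun _ ↦ (1 : 𝕜) := by
  have hcancel : (fun t ↦ (t - a)⁻¹ • (t - a)) =O[𝓝 a] fun _ ↦ (1 : 𝕜) :=
    .of_bound 1 <| .of_forall fun t ↦ by
      obtain h | h := eq_or_ne (t - a) 0 <;> simp [h]
  exact ((isBigO_refl (fun t ↦ (t - a)⁻¹) (𝓝 a)).smul hf.isBigO_sub).trans hcancel

theorem integrable_slope {𝕜 E : Type*} [NontriviallyNormedField 𝕜] [SecondCountableTopology 𝕜]
    [MeasurableSpace 𝕜] [BorelSpace 𝕜] [NormedAddCommGroup E] [NormedSpace 𝕜 E]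
    {μ : Measure 𝕜} [IsLocallyFiniteMeasure μ] {f : 𝕜 → E} {a : 𝕜}
    (hf : DifferentiableAt 𝕜 f a) (hint : Integrable (fun t ↦ f t - f a) μ) :
    Integrable (slope f a) μ := by
  have hinv : AEStronglyMeasurable (fun t ↦ (t - a)⁻¹) μ := by measurability
  have hslope : AEStronglyMeasurable (slope f a) μ := hinv.smul hint.aestronglyMeasurable
  obtain ⟨s, hs, hnear⟩ := (slope_isBigO_one hf).integrableAtFilter
    hslope.stronglyMeasurableAtFilter (locallyIntegrable_const (1 : 𝕜) a)
  obtain ⟨r, hr, hball⟩ := Metric.mem_nhds_iff.1 hs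
  have hfar : IntegrableOn (slope f a) (Metric.ball a r)ᶜ μ := by
    refine hint.restrict.bdd_smul r⁻¹ hinv.restrict ?_
    filter_upwards [ae_restrict_mem measurableSet_ball.compl] with t ht
    rw [mem_compl_iff, Metric.mem_ball, not_lt, dist_eq_norm] at ht
    rw [norm_inv]
    gcongr
  rw [← integrableOn_univ, ← union_compl_self (Metric.ball a r)]
  exact (hnear.mono_set hball).union hfar

theorem integrableOn_exp_neg_mul_cpow_sub_one {z : ℂ} (hz : -1 < z.re) :
    IntegrableOn (fun t : ℝ ↦ (Real.exp (-t) : ℂ) * ((t : ℂ) ^ z - 1)) (Ioi 0) := by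
  have hpow := Complex.GammaIntegral_convergent (s := z + 1)
    (by rw [Complex.add_re, Complex.one_re]; linarith)
  have hone := Complex.GammaIntegral_convergent (s := 1) (by simp)
  simpa only [Pi.sub_def, add_sub_cancel_right, sub_self, Complex.cpow_zero, ← mul_sub]
    using hpow.sub hone

theorem integrableOn_kurepa_integrand {z : ℂ} (hz : -1 < z.re) :
    IntegrableOn (fun t : ℝ ↦ (Real.exp (-t) : ℂ) * (((t : ℂ) ^ z - 1) / ((t : ℂ) - 1)))
      (Ioi 0) := by
  let f : ℝ → ℂ := fun t ↦ (Real.exp (-t) : ℂ) * ((t : ℂ) ^ z - 1)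
  have hf : DifferentiableAt ℝ f 1 := by fun_prop (disch := simp)
  have hf_one : f 1 = 0 := by simp [f]
  have hint : IntegrableOn (fun t ↦ f t - f 1) (Ioi 0) := by
    simpa only [hf_one, sub_zero] using integrableOn_exp_neg_mul_cpow_sub_one hz
  refine (integrable_slope hf hint).congr (.of_forall fun t ↦ ?_)
  rw [slope_def_module, hf_one, sub_zero, Complex.real_smul]
  push_cast [f]
  ring

theorem kurepa_add_one {z : ℂ} (hz : -1 < z.re) :
    kurepa (z + 1) = kurepa z + Complex.Gamma (z + 1) := by
  have hre : 0 < (z + 1).re := by rw [Complex.add_re, Complex.one_re]; linarith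
  rw [← sub_eq_iff_eq_add', Complex.Gamma_eq_integral hre, Complex.GammaIntegral, kurepa, kurepa,
    ← integral_sub (integrableOn_kurepa_integrand (by linarith))
      (integrableOn_kurepa_integrand hz)]
  refine integral_congr_ae ?_
  filter_upwards [ae_restrict_of_ae (Measure.ae_ne volume (1 : ℝ)),
    ae_restrict_mem measurableSet_Ioi] with t ht_one ht_pos
  have ht : (t : ℂ) ≠ 0 := Complex.ofReal_ne_zero.2 (ne_of_gt ht_pos)
  have ht_sub : (t : ℂ) - 1 ≠ 0 := sub_ne_zero.2 (Complex.ofReal_ne_one.2 ht_one)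
  have htelescope : ((t : ℂ) ^ (z + 1) - 1) / (t - 1) - ((t : ℂ) ^ z - 1) / (t - 1) =
      (t : ℂ) ^ z := by
    rw [← sub_div, div_eq_iff ht_sub, Complex.cpow_add _ _ ht, Complex.cpow_one]
    ring
  rw [← mul_sub, htelescope, add_sub_cancel_right]

theorem kurepa_second_order_functional_equation_general (z : ℂ) (hz : 0 < z.re) :
    kurepa (z + 1) - (z + 1) * kurepa z + z * kurepa (z - 1) = 0 := by
  have hne : z ≠ 0 := Complex.ne_zero_of_re_pos hz
  have hstep : kurepa (z + 1) = kurepa z + z * Complex.Gamma z := by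
    rw [kurepa_add_one (by linarith), Complex.Gamma_add_one z hne]
  have hstep_pred : kurepa z = kurepa (z - 1) + Complex.Gamma z := by
    simpa only [sub_add_cancel] using
      kurepa_add_one (z := z - 1) (by rw [Complex.sub_re, Complex.one_re]; linarith)
  linear_combination hstep - z * hstep_pred

/-- For `Re z > 1`, Kurepa's function satisfies the second-order functional
equation `K(z+1) - (z+1) K(z) + z K(z-1) = 0`. -/
theorem kurepa_second_order_functional_equation (z : ℂ) (hz : 1 < z.re) :
    kurepa (z + 1) - (z + 1) * kurepa z + z * kurepa (z - 1) = 0 :=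
  kurepa_second_order_functional_equation_general z (by linarith)
end

section
/- For every natural number n ≥ 1 and every complex number z with Re z > n, Kurepa's function satisfies K(z) = K(z − n) + R_n(z) · Γ(z + 1), where R_n(z) = Σ_{j=0}^{n−1} Π_{i=0}^{j} 1/(z − i) and Γ is the complex Gamma function. -/
open MeasureTheory Set

/-- The rational function `R n z = ∑_{j=0}^{n-1} ∏_{i=0}^{j} 1/(z-i)`. -/
noncomputable def kurepaR (n : ℕ) (z : ℂ) : ℂ :=
  ∑ j ∈ Finset.range n, ∏ i ∈ Finset.range (j + 1), (1 / (z - (i : ℂ)))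

/-!
Since `t ^ w - t ^ (w - 1) = t ^ (w - 1) * (t - 1)`, the denominator cancels in the difference of
the integrands of `K(w)` and `K(w - 1)`, leaving Euler's integral for `Γ(w)`. So
`K(w) - K(w - 1) = Γ(w)` whenever both integrals converge, that is, for `0 < Re w`. Telescoping
gives `K(z) - K(z - n) = ∑_{j < n} Γ(z - j)`, and the functional equation of `Γ` turns `Γ(z - j)`
into `Γ(z + 1) ∏_{i ≤ j} 1 / (z - i)`.

Convergence: near `t = 1` the quotient is a difference quotient of the differentiable function
`t ^ w`, and away from `1` the integrand is dominated by a multiple of `e ^ (-t) (t ^ Re w + 1)`.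
-/

theorem integrableOn_slope_of_continuousOn {𝕜 E : Type*} [NontriviallyNormedField 𝕜]
    [MeasurableSpace 𝕜] [OpensMeasurableSpace 𝕜] [NormedAddCommGroup E] [NormedSpace 𝕜 E]
    {μ : Measure 𝕜} [IsFiniteMeasureOnCompacts μ] [NullSingletonClass μ] {f : 𝕜 → E} {a : 𝕜}
    {s : Set 𝕜} (hf : ContinuousOn f s) (hs : IsCompact s) (ha : s ∈ nhds a)
    (hfa : DifferentiableAt 𝕜 f a) :
    IntegrableOn (slope f a) s μ := by
  have hdslope : ContinuousOn (dslope f a) s := (continuousOn_dslope ha).2 ⟨hf, hfa⟩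
  refine (hdslope.integrableOn_compact hs).congr (ae_restrict_of_ae ?_)
  filter_upwards [μ.ae_ne a] with t ht using dslope_of_ne f ht

/-- The integrand of Kurepa's function. At the removable singularity `t = 1` its value is `0`
(from `x / 0 = 0`) rather than the continuous extension; this does not affect the integral. -/
noncomputable def kurepaIntegrand (w : ℂ) (t : ℝ) : ℂ :=
  (Real.exp (-t) : ℂ) * (((t : ℂ) ^ w - 1) / ((t : ℂ) - 1))

theorem kurepa_eq_integral_kurepaIntegrand (w : ℂ) :
    kurepa w = ∫ t in Ioi (0 : ℝ), kurepaIntegrand w t :=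
  rfl

theorem kurepaIntegrand_eq_exp_mul_slope (w : ℂ) (t : ℝ) :
    kurepaIntegrand w t = (Real.exp (-t) : ℂ) * slope (fun x : ℝ ↦ (x : ℂ) ^ w) 1 t := by
  simp [kurepaIntegrand, slope_def_module, Complex.real_smul, div_eq_inv_mul]

theorem measurable_kurepaIntegrand (w : ℂ) : Measurable (kurepaIntegrand w) := by
  unfold kurepaIntegrand
  fun_prop

theorem norm_kurepaIntegrand_le (w : ℂ) {t : ℝ} (ht : 0 < t) :
    ‖kurepaIntegrand w t‖ ≤ |t - 1|⁻¹ * (Real.exp (-t) * t ^ w.re + Real.exp (-t)) := by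
  have hnum : ‖(t : ℂ) ^ w - 1‖ ≤ t ^ w.re + 1 := by
    simpa [Complex.norm_cpow_eq_rpow_re_of_pos ht] using norm_sub_le ((t : ℂ) ^ w) 1
  have hden : ‖(t : ℂ) - 1‖ = |t - 1| := by
    rw [← Complex.ofReal_one, ← Complex.ofReal_sub, Complex.norm_real, Real.norm_eq_abs]
  calc
    ‖kurepaIntegrand w t‖ = Real.exp (-t) * (‖(t : ℂ) ^ w - 1‖ / |t - 1|) := by
      rw [kurepaIntegrand, norm_mul, norm_div, hden, Complex.norm_real,
        Real.norm_of_nonneg (Real.exp_nonneg _)]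
    _ ≤ Real.exp (-t) * ((t ^ w.re + 1) / |t - 1|) := by gcongr
    _ = |t - 1|⁻¹ * (Real.exp (-t) * t ^ w.re + Real.exp (-t)) := by ring

theorem integrableOn_kurepaIntegrand_closedBall (w : ℂ) {r : ℝ} (hr₀ : 0 < r) (hr₁ : r < 1) :
    IntegrableOn (kurepaIntegrand w) (Metric.closedBall 1 r) := by
  have hcont : ContinuousOn (fun x : ℝ ↦ (x : ℂ) ^ w) (Metric.closedBall 1 r) := by
    intro t ht
    have ht₀ : t ≠ 0 := by
      rintro rfl
      simp only [Metric.mem_closedBall, Real.dist_eq, zero_sub, abs_neg, abs_one] at ht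
      linarith
    exact (Complex.continuousAt_ofReal_cpow_const t w (Or.inr ht₀)).continuousWithinAt
  have hdiff : DifferentiableAt ℝ (fun x : ℝ ↦ (x : ℂ) ^ w) 1 :=
    ((differentiableAt_id.cpow_const (by simp)).hasDerivAt.comp_ofReal).differentiableAt
  have hslope := integrableOn_slope_of_continuousOn (μ := volume) hcont
    (isCompact_closedBall 1 r) (Metric.closedBall_mem_nhds 1 hr₀) hdiff
  have hexp : ContinuousOn (fun t : ℝ ↦ (Real.exp (-t) : ℂ)) (Metric.closedBall 1 r) := by
    fun_prop
  simpa only [funext (kurepaIntegrand_eq_exp_mul_slope w)] using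
    hslope.continuousOn_mul hexp (isCompact_closedBall 1 r)

theorem integrableOn_kurepaIntegrand {w : ℂ} (hw : -1 < w.re) :
    IntegrableOn (kurepaIntegrand w) (Ioi 0) := by
  let B := Metric.closedBall (1 : ℝ) (1 / 2)
  have hnear : IntegrableOn (kurepaIntegrand w) (Ioi 0 ∩ B) :=
    (integrableOn_kurepaIntegrand_closedBall w (by norm_num) (by norm_num)).mono_set
      inter_subset_right
  have hdom : IntegrableOn (fun t ↦ 2 * (Real.exp (-t) * t ^ w.re + Real.exp (-t))) (Ioi 0) := by
    have hGamma := Real.GammaIntegral_convergent (s := w.re + 1) (by linarith)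
    rw [add_sub_cancel_right] at hGamma
    exact (hGamma.add (integrableOn_exp_neg_Ioi 0)).const_mul 2
  have hfar : IntegrableOn (kurepaIntegrand w) (Ioi 0 \ B) := by
    refine (hdom.mono_set sdiff_subset).mono' (measurable_kurepaIntegrand w).aestronglyMeasurable ?_
    filter_upwards [ae_restrict_mem (measurableSet_Ioi.diff measurableSet_closedBall)]
      with t ⟨ht, htB⟩
    have ht0 : 0 < t := ht
    have hdist : 1 / 2 < |t - 1| := by simpa [B, Real.dist_eq] using htB
    have hinv : |t - 1|⁻¹ ≤ 2 := inv_le_of_inv_le₀ (by norm_num) (by linarith)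
    refine (norm_kurepaIntegrand_le w ht0).trans ?_
    gcongr
  simpa only [inter_union_sdiff] using hnear.union hfar

theorem kurepaIntegrand_sub_kurepaIntegrand_sub_one (w : ℂ) {t : ℝ} (ht₀ : t ≠ 0) (ht₁ : t ≠ 1) :
    kurepaIntegrand w t - kurepaIntegrand (w - 1) t = (Real.exp (-t) : ℂ) * (t : ℂ) ^ (w - 1) := by
  have hden : (t : ℂ) - 1 ≠ 0 := sub_ne_zero.2 (mod_cast ht₁)
  have hpow : (t : ℂ) ^ w = t * (t : ℂ) ^ (w - 1) := by
    simpa only [Complex.cpow_one, add_sub_cancel] using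
      Complex.cpow_add 1 (w - 1) (Complex.ofReal_ne_zero.2 ht₀)
  rw [kurepaIntegrand, kurepaIntegrand, hpow]
  field_simp
  ring

theorem kurepa_sub_kurepa_sub_one {w : ℂ} (hw : 0 < w.re) :
    kurepa w - kurepa (w - 1) = Complex.Gamma w := by
  rw [kurepa_eq_integral_kurepaIntegrand, kurepa_eq_integral_kurepaIntegrand,
    ← integral_sub (integrableOn_kurepaIntegrand (by linarith))
      (integrableOn_kurepaIntegrand (by simpa using hw)),
    Complex.Gamma_eq_integral hw, Complex.GammaIntegral]
  refine integral_congr_ae ?_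
  filter_upwards [ae_restrict_mem measurableSet_Ioi, Measure.ae_ne _ 1] with t ht₀ ht₁
  exact kurepaIntegrand_sub_kurepaIntegrand_sub_one w (ne_of_gt ht₀) ht₁

theorem kurepa_sub_kurepa_sub_nat (n : ℕ) {z : ℂ} (hz : (n : ℝ) - 1 < z.re) :
    kurepa z - kurepa (z - n) = ∑ j ∈ Finset.range n, Complex.Gamma (z - j) := by
  have hstep : ∀ j ∈ Finset.range n,
      Complex.Gamma (z - j) = kurepa (z - j) - kurepa (z - (j + 1 : ℕ)) := by
    intro j hj
    have hjn : (j : ℝ) + 1 ≤ n := mod_cast Finset.mem_range.1 hj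
    have hre : 0 < (z - j).re := by
      rw [Complex.sub_re, Complex.natCast_re]
      linarith
    rw [← kurepa_sub_kurepa_sub_one hre, Nat.cast_add_one, sub_sub]
  rw [Finset.sum_congr rfl hstep, Finset.sum_range_sub', Nat.cast_zero, sub_zero]

theorem prod_one_div_sub_mul_Gamma_add_one (n : ℕ) {z : ℂ} (hz : ∀ i < n, z ≠ i) :
    (∏ i ∈ Finset.range n, 1 / (z - i)) * Complex.Gamma (z + 1) = Complex.Gamma (z + 1 - n) := by
  induction n with
  | zero => simp
  | succ n ih =>
    have hne : z - n ≠ 0 := sub_ne_zero.2 (hz n n.lt_succ_self)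
    have hGamma : Complex.Gamma (z + 1 - n) = (z - n) * Complex.Gamma (z - n) := by
      rw [← Complex.Gamma_add_one _ hne, sub_add_eq_add_sub]
    rw [Finset.prod_range_succ, mul_right_comm, ih fun i hi ↦ hz i (hi.trans n.lt_succ_self),
      hGamma, Nat.cast_add_one, add_sub_add_right_eq_sub]
    field_simp

theorem kurepaR_mul_Gamma_add_one (n : ℕ) {z : ℂ} (hz : ∀ i < n, z ≠ i) :
    kurepaR n z * Complex.Gamma (z + 1) = ∑ j ∈ Finset.range n, Complex.Gamma (z - j) := by
  rw [kurepaR, Finset.sum_mul]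
  refine Finset.sum_congr rfl fun j hj ↦ ?_
  have hjn : j + 1 ≤ n := Finset.mem_range.1 hj
  rw [prod_one_div_sub_mul_Gamma_add_one (j + 1) fun i hi ↦ hz i (hi.trans_le hjn),
    Nat.cast_add_one, add_sub_add_right_eq_sub]

theorem kurepa_eq_kurepa_sub_nat_add_R_mul_Gamma_general
    (n : ℕ) (z : ℂ) (hz : (n : ℝ) - 1 < z.re) :
    kurepa z = kurepa (z - n) + kurepaR n z * Complex.Gamma (z + 1) := by
  have hne : ∀ i < n, z ≠ i := by
    rintro i hi rfl
    have hin : (i : ℝ) + 1 ≤ n := mod_cast hi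
    rw [Complex.natCast_re] at hz
    linarith
  rw [kurepaR_mul_Gamma_add_one n hne, ← kurepa_sub_kurepa_sub_nat n hz, add_sub_cancel]

/-- For `n ≥ 1` and `Re z > n`, Kurepa's function satisfies
`K(z) = K(z - n) + R_n(z) Γ(z + 1)`. -/
theorem kurepa_eq_kurepa_sub_nat_add_R_mul_Gamma
    (n : ℕ) (hn : 1 ≤ n) (z : ℂ) (hz : (n : ℝ) < z.re) :
    kurepa z = kurepa (z - n) + kurepaR n z * Complex.Gamma (z + 1) :=
  kurepa_eq_kurepa_sub_nat_add_R_mul_Gamma_general n z (by linarith)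
end
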